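/- For the function E_k defined for k ≥ 1 by E_k(z) = (e^{−iz}/Γ(k)²) · Σ_{m=0}^∞ (Γ(k+m)/(m!)²)·(2ψ(m+1) − ψ(m+k) − ln(iz))·(iz)^m (with E_0(z) = e^{−iz}), the recursion ∂_z(z·∂_z E_{k+1}(z)) = i·E_k(z) holds, and there is a constant c depending only on k such that |E_k(z)| ≤ c·(1 + ln₊(1/|z|)) for all real z ≠ 0. -/

import Mathlib

/-- The positive part of the logarithm: `ln₊ x = max (ln x) 0`. -/
noncomputable def lnp (x : ℝ) : ℝ := max (Real.log x) 0

/-- The digamma function at positive integer arguments: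
`ψ(n) = −γ + Σ_{j=1}^{n−1} 1/j = −γ + H_{n−1}`. -/
noncomputable def digammaNat (n : ℕ) : ℝ :=
  -Real.eulerMascheroniConstant + (harmonic (n - 1) : ℝ)

/-- The exponential-integral functions
`E_0(z) = e^{−iz}` and, for `k ≥ 1`,
`E_k(z) = (e^{−iz}/Γ(k)²) Σ_{m=0}^∞ (Γ(k+m)/(m!)²)(2ψ(m+1) − ψ(m+k) − ln(iz))(iz)^m`. -/
noncomputable def Efun : ℕ → ℝ → ℂ
  | 0, z => Complex.exp (-Complex.I * (z : ℂ))
  | (k + 1), z =>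
      Complex.exp (-Complex.I * (z : ℂ)) / (Complex.Gamma ((k : ℂ) + 1)) ^ 2 *
        ∑' m : ℕ, (Complex.Gamma ((k : ℂ) + 1 + (m : ℂ)) / ((m.factorial : ℂ)) ^ 2) *
          (((2 * digammaNat (m + 1) - digammaNat (m + k + 1) : ℝ) : ℂ)
              - Complex.log (Complex.I * (z : ℂ))) *
          (Complex.I * (z : ℂ)) ^ m


/-- Entire coefficient sequences. -/
def EntC (a : ℕ → ℂ) : Prop :=
  ∃ C R : ℝ, 0 ≤ C ∧ 0 ≤ R ∧ ∀ m, ‖a m‖ ≤ C * (R ^ m / (m.factorial : ℝ))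

noncomputable def FS (a : ℕ → ℂ) (w : ℂ) : ℂ := ∑' m, a m * w ^ m

def shC (a : ℕ → ℂ) : ℕ → ℂ
  | 0 => 0
  | (m + 1) => a m

def thC (a : ℕ → ℂ) : ℕ → ℂ := fun m => (m : ℂ) * a m

lemma EntC.th {a : ℕ → ℂ} (h : EntC a) : EntC (thC a) := by
  obtain ⟨C, R, hC, hR, h⟩ := h
  refine ⟨C, 2 * R, hC, by positivity, fun m => ?_⟩
  have h2 : (m : ℝ) ≤ 2 ^ m := by exact_mod_cast (Nat.lt_two_pow_self (n := m)).le
  simp only [thC, norm_mul, Complex.norm_natCast]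
  calc (m : ℝ) * ‖a m‖ ≤ 2 ^ m * (C * (R ^ m / (m.factorial : ℝ))) := by
        gcongr; exact h m
    _ = _ := by rw [mul_pow]; ring

lemma EntC.summable_norm {a : ℕ → ℂ} (h : EntC a) (r : ℝ) (hr : 0 ≤ r) :
    Summable (fun m => ‖a m‖ * r ^ m) := by
  obtain ⟨C, R, hC, hR, h⟩ := h
  refine Summable.of_nonneg_of_le (fun m => by positivity) (fun m => ?_)
    ((Real.summable_pow_div_factorial (R * r)).mul_left C)
  calc ‖a m‖ * r ^ m ≤ (C * (R ^ m / (m.factorial : ℝ))) * r ^ m := by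
        gcongr; exact h m
    _ = _ := by rw [mul_pow]; ring

lemma EntC.summable {a : ℕ → ℂ} (h : EntC a) (w : ℂ) :
    Summable (fun m => a m * w ^ m) := by
  apply Summable.of_norm
  simpa using h.summable_norm ‖w‖ (norm_nonneg _)

lemma EntC.hasSum {a : ℕ → ℂ} (h : EntC a) (w : ℂ) :
    HasSum (fun m => a m * w ^ m) (FS a w) := (h.summable w).hasSum

lemma EntC.hasSum_sh {a : ℕ → ℂ} (h : EntC a) (w : ℂ) :
    HasSum (fun m => shC a m * w ^ m) (w * FS a w) := by
  rw [← hasSum_nat_add_iff' 1]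
  simp only [Finset.range_one, Finset.sum_singleton, shC, zero_mul, sub_zero]
  have h2 := (h.hasSum w).mul_left w
  have h3 : (fun m => a m * w ^ (m + 1)) = fun m => w * (a m * w ^ m) := by
    funext m; ring
  rw [h3]
  exact h2

lemma EntC.bound {a : ℕ → ℂ} (h : EntC a) : ∃ B : ℝ, 0 ≤ B ∧ ∀ w : ℂ, ‖w‖ ≤ 1 → ‖FS a w‖ ≤ B := by
  have hs := h.summable_norm 1 zero_le_one
  refine ⟨∑' m, ‖a m‖ * 1 ^ m, tsum_nonneg (fun m => by positivity), fun w hw => ?_⟩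
  refine tsum_of_norm_bounded hs.hasSum (fun m => ?_)
  rw [norm_mul, norm_pow]
  gcongr

lemma EntC.hasDerivAt {a : ℕ → ℂ} (h : EntC a) (w : ℂ) (hw : w ≠ 0) :
    HasDerivAt (FS a) (FS (thC a) w / w) w := by
  have hs := h.th.summable_norm (‖w‖ + 1) (by positivity)
  have hs' : Summable (fun m => ‖a m‖ * (m * (‖w‖ + 1) ^ (m - 1))) := by
    refine Summable.of_nonneg_of_le (fun m => by positivity) (fun m => ?_) hs
    simp only [thC, norm_mul, Complex.norm_natCast]
    have : (‖w‖ + 1) ^ (m - 1) ≤ (‖w‖ + 1) ^ m :=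
      pow_le_pow_right₀ (by linarith [norm_nonneg w]) (Nat.sub_le _ _)
    calc ‖a m‖ * (m * (‖w‖ + 1) ^ (m - 1)) ≤ ‖a m‖ * (m * (‖w‖ + 1) ^ m) := by gcongr
      _ = _ := by ring
  have key := hasDerivAt_tsum_of_isPreconnected (𝕜 := ℂ) (g := fun m y => a m * y ^ m)
    (g' := fun m y => a m * (m * y ^ (m - 1))) (t := Metric.ball 0 (‖w‖ + 1)) (y₀ := w) (y := w) hs'
    Metric.isOpen_ball (convex_ball _ _).isPreconnected
    (fun m y _ => (hasDerivAt_pow m y).const_mul _)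
    (fun m y hy => by
      have : ‖y‖ ≤ ‖w‖ + 1 := by
        have := Metric.mem_ball.1 hy
        rw [dist_zero_right] at this
        exact this.le
      rw [norm_mul, norm_mul, norm_pow, Complex.norm_natCast]
      gcongr)
    (by simp) (h.summable w) (by simp)
  have heq : FS (thC a) w / w = ∑' m : ℕ, a m * (m * w ^ (m - 1)) := by
    rw [div_eq_iff hw]
    unfold FS
    rw [← tsum_mul_right]
    congr 1
    funext m
    rcases m with _ | m
    · simp [thC]
    · simp [thC, pow_succ]; ring
  rw [heq]
  exact key

noncomputable def aQ (n m : ℕ) : ℂ := ((n + m).factorial : ℂ) / (m.factorial : ℂ) ^ 2 / (n.factorial : ℂ) ^ 2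

noncomputable def dC (n m : ℕ) : ℂ :=
  -(Real.eulerMascheroniConstant : ℂ) + 2 * ((harmonic m : ℚ) : ℂ) - ((harmonic (m + n) : ℚ) : ℂ)

noncomputable def aP (n m : ℕ) : ℂ := aQ n m * dC n m

lemma norm_aQ_le (n m : ℕ) : ‖aQ n m‖ ≤ 2 ^ n * (2 ^ m / (m.factorial : ℝ)) := by
  have h1 : ((n + m).factorial : ℝ) ≤ 2 ^ (n + m) * ((n.factorial : ℝ) * m.factorial) := by
    have := Nat.add_choose_mul_factorial_mul_factorial n m
    have h2 := Nat.choose_le_two_pow (n + m) m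
    rw [← this]
    push_cast
    rw [mul_assoc]
    gcongr
    exact_mod_cast h2
  have hn : (1 : ℝ) ≤ n.factorial := by exact_mod_cast Nat.factorial_pos n
  have hm : (0 : ℝ) < m.factorial := by exact_mod_cast Nat.factorial_pos m
  simp only [aQ, norm_div, norm_pow, Complex.norm_natCast]
  rw [div_div, div_le_iff₀ (by positivity)]
  calc ((n + m).factorial : ℝ) ≤ 2 ^ (n + m) * ((n.factorial : ℝ) * m.factorial) := h1
    _ ≤ 2 ^ (n + m) * ((n.factorial : ℝ) ^ 2 * m.factorial) := by
        gcongr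
        nlinarith
    _ = _ := by field_simp; ring

lemma EntC_aQ (n : ℕ) : EntC (aQ n) :=
  ⟨2 ^ n, 2, by positivity, by positivity, norm_aQ_le n⟩

lemma harmonic_le_self (n : ℕ) : harmonic n ≤ n := by
  induction n with
  | zero => simp
  | succ n ih =>
    rw [harmonic_succ]
    push_cast
    have : ((n : ℚ) + 1)⁻¹ ≤ 1 := inv_le_one_of_one_le₀ (by linarith [(Nat.cast_nonneg n : (0:ℚ) ≤ n)])
    linarith

lemma harmonic_nonneg' (n : ℕ) : 0 ≤ harmonic n := by
  unfold harmonic; positivity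

lemma norm_harmonic_le (n : ℕ) : ‖((harmonic n : ℚ) : ℂ)‖ ≤ n := by
  have h : ((harmonic n : ℚ) : ℂ) = (((harmonic n : ℚ) : ℝ) : ℂ) := by push_cast; rfl
  rw [h, Complex.norm_real, Real.norm_of_nonneg (by exact_mod_cast harmonic_nonneg' n)]
  exact_mod_cast harmonic_le_self n

lemma norm_dC_le (n m : ℕ) : ‖dC n m‖ ≤ (n + 4) * 2 ^ m := by
  have hg : ‖(Real.eulerMascheroniConstant : ℂ)‖ ≤ 1 := by
    rw [Complex.norm_real, Real.norm_eq_abs, abs_le]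
    constructor <;> linarith [Real.one_half_lt_eulerMascheroniConstant,
      Real.eulerMascheroniConstant_lt_two_thirds]
  have h2 : (m : ℝ) + 1 ≤ 2 ^ m := by exact_mod_cast (Nat.lt_two_pow_self (n := m))
  calc ‖dC n m‖ ≤ ‖(Real.eulerMascheroniConstant : ℂ)‖ + 2 * ‖((harmonic m : ℚ) : ℂ)‖
        + ‖((harmonic (m + n) : ℚ) : ℂ)‖ := by
        unfold dC
        refine (norm_sub_le _ _).trans ?_
        gcongr
        refine (norm_add_le _ _).trans ?_
        simp
    _ ≤ 1 + 2 * m + ((m + n : ℕ) : ℝ) := by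
        gcongr
        · exact norm_harmonic_le m
        · exact norm_harmonic_le _
    _ ≤ (n + 4) * (m + 1) := by
        push_cast
        nlinarith [(Nat.cast_nonneg n : (0:ℝ) ≤ n), (Nat.cast_nonneg m : (0:ℝ) ≤ m)]
    _ ≤ _ := by gcongr

lemma EntC_aP (n : ℕ) : EntC (aP n) := by
  refine ⟨2 ^ n * (n + 4), 4, by positivity, by positivity, fun m => ?_⟩
  rw [aP, norm_mul]
  calc ‖aQ n m‖ * ‖dC n m‖ ≤ (2 ^ n * (2 ^ m / (m.factorial : ℝ))) * ((n + 4) * 2 ^ m) := by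
        gcongr
        · exact norm_aQ_le n m
        · exact norm_dC_le n m
    _ = _ := by
        rw [show (4 : ℝ) = 2 * 2 by norm_num, mul_pow]; ring

lemma Efun_succ_eq (n : ℕ) (z : ℝ) : Efun (n + 1) z =
    Complex.exp (-Complex.I * z) * (FS (aP n) (Complex.I * z)
      - Complex.log (Complex.I * z) * FS (aQ n) (Complex.I * z)) := by
  have h1 := (EntC_aP n).hasSum (Complex.I * z)
  have h2 := ((EntC_aQ n).hasSum (Complex.I * z)).mul_left (Complex.log (Complex.I * z))
  have h3 := h1.sub h2
  rw [← h3.tsum_eq]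
  simp only [Efun]
  rw [div_mul_eq_mul_div, mul_div_assoc, ← tsum_div_const]
  congr 2
  funext m
  have hg : Complex.Gamma ((n : ℂ) + 1) = n.factorial := Complex.Gamma_nat_eq_factorial n
  have hg' : Complex.Gamma ((n : ℂ) + 1 + m) = (n + m).factorial := by
    rw [← Complex.Gamma_nat_eq_factorial]; congr 1; push_cast; ring
  rw [hg, hg']
  simp only [aP, aQ, dC, digammaNat, Nat.add_sub_cancel]
  push_cast
  ring

lemma aQ_succ (n m : ℕ) : aQ (n + 1) m = aQ n m * ((n + m + 1) / ((n : ℂ) + 1) ^ 2) := by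
  have h1 : (m.factorial : ℂ) ≠ 0 := by exact_mod_cast m.factorial_ne_zero
  have h2 : (n.factorial : ℂ) ≠ 0 := by exact_mod_cast n.factorial_ne_zero
  have h3 : (n : ℂ) + 1 ≠ 0 := by exact_mod_cast n.succ_ne_zero
  unfold aQ
  rw [show n + 1 + m = (n + m) + 1 by ring, Nat.factorial_succ, Nat.factorial_succ]
  push_cast
  field_simp

lemma aQ_succ_right (n m : ℕ) : aQ n (m + 1) = aQ n m * ((n + m + 1) / ((m : ℂ) + 1) ^ 2) := by
  have h1 : (m.factorial : ℂ) ≠ 0 := by exact_mod_cast m.factorial_ne_zero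
  have h2 : (n.factorial : ℂ) ≠ 0 := by exact_mod_cast n.factorial_ne_zero
  have h3 : (m : ℂ) + 1 ≠ 0 := by exact_mod_cast m.succ_ne_zero
  unfold aQ
  rw [show n + (m + 1) = (n + m) + 1 by ring, Nat.factorial_succ, Nat.factorial_succ]
  push_cast
  field_simp

lemma dC_succ (n m : ℕ) : dC (n + 1) m = dC n m - 1 / ((n : ℂ) + m + 1) := by
  unfold dC
  rw [show m + (n + 1) = (m + n) + 1 by ring, harmonic_succ (m + n)]
  push_cast
  rw [one_div, show (m : ℂ) + n + 1 = n + m + 1 by ring]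
  ring

lemma dC_succ_right (n m : ℕ) :
    dC n (m + 1) = dC n m + 2 / ((m : ℂ) + 1) - 1 / ((n : ℂ) + m + 1) := by
  unfold dC
  rw [show m + 1 + n = (m + n) + 1 by ring, harmonic_succ (m + n), harmonic_succ m]
  push_cast
  rw [one_div, show (m : ℂ) + n + 1 = n + m + 1 by ring]
  ring

lemma R1Q (n m : ℕ) : aQ n m = (n + 1 - m) * aQ (n + 1) m + shC (aQ (n + 1)) m := by
  have h3 : (n : ℂ) + 1 ≠ 0 := by exact_mod_cast n.succ_ne_zero
  rcases m with _ | m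
  · simp only [shC, aQ_succ]; push_cast; field_simp; ring
  · have h4 : (m : ℂ) + 1 ≠ 0 := by exact_mod_cast m.succ_ne_zero
    simp only [shC, aQ_succ, aQ_succ_right]; push_cast; field_simp; ring

lemma R1P (n m : ℕ) : aP n m = (n + 1 - m) * aP (n + 1) m + shC (aP (n + 1)) m + aQ (n + 1) m := by
  have h3 : (n : ℂ) + 1 ≠ 0 := by exact_mod_cast n.succ_ne_zero
  have h5 : (n : ℂ) + m + 1 ≠ 0 := by exact_mod_cast (n + m).succ_ne_zero
  rcases m with _ | m
  · simp only [shC, aP, aQ_succ, dC_succ]; push_cast at *; field_simp; ring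
  · have h4 : (m : ℂ) + 1 ≠ 0 := by exact_mod_cast m.succ_ne_zero
    have h6 : (n : ℂ) + m + 1 ≠ 0 := by exact_mod_cast (n + m).succ_ne_zero
    simp only [shC, aP, aQ_succ, aQ_succ_right, dC_succ, dC_succ_right]
    push_cast at *
    field_simp
    ring

lemma R2Q (n m : ℕ) : ((n : ℂ) + 1) * (m * aQ (n + 1) m - shC (aQ (n + 1)) m) = m * aQ n m := by
  have h3 : (n : ℂ) + 1 ≠ 0 := by exact_mod_cast n.succ_ne_zero
  rcases m with _ | m
  · simp [shC]
  · have h4 : (m : ℂ) + 1 ≠ 0 := by exact_mod_cast m.succ_ne_zero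
    simp only [shC, aQ_succ, aQ_succ_right]; push_cast; field_simp; ring

lemma R2P (n m : ℕ) : ((n : ℂ) + 1) * (m * aP (n + 1) m - aQ (n + 1) m - shC (aP (n + 1)) m)
    = m * aP n m - aQ n m := by
  have h3 : (n : ℂ) + 1 ≠ 0 := by exact_mod_cast n.succ_ne_zero
  have h5 : (n : ℂ) + m + 1 ≠ 0 := by exact_mod_cast (n + m).succ_ne_zero
  rcases m with _ | m
  · simp only [shC, aP, aQ_succ, dC_succ]; push_cast at *; field_simp; ring
  · have h4 : (m : ℂ) + 1 ≠ 0 := by exact_mod_cast m.succ_ne_zero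
    have h6 : (n : ℂ) + m + 1 ≠ 0 := by exact_mod_cast (n + m).succ_ne_zero
    simp only [shC, aP, aQ_succ, aQ_succ_right, dC_succ, dC_succ_right]
    push_cast at *
    field_simp
    ring

lemma R0Q (m : ℕ) : m * aQ 0 m - shC (aQ 0) m = 0 := by
  rcases m with _ | m
  · simp [shC]
  · have h4 : (m : ℂ) + 1 ≠ 0 := by exact_mod_cast m.succ_ne_zero
    simp only [shC, aQ_succ_right]; push_cast; field_simp; ring

lemma R0P (m : ℕ) : m * aP 0 m - aQ 0 m - shC (aP 0) m = if m = 0 then -1 else 0 := by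
  rcases m with _ | m
  · simp [shC, aQ]
  · have h4 : (m : ℂ) + 1 ≠ 0 := by exact_mod_cast m.succ_ne_zero
    simp only [shC, aP, aQ_succ_right, dC_succ_right]; push_cast
    rw [zero_add]
    field_simp
    ring

lemma HasSum.congr' {f g : ℕ → ℂ} {S : ℂ} (h : HasSum f S) (hfg : ∀ m, g m = f m) :
    HasSum g S := by
  rwa [show g = f from funext hfg]

/-- The function z times the derivative of E of index n+1. -/
noncomputable def Tfun (n : ℕ) (z : ℝ) : ℂ :=
  Complex.exp (-Complex.I * z) * (FS (thC (aP n)) (Complex.I * z) - FS (aQ n) (Complex.I * z)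
    - Complex.log (Complex.I * z) * FS (thC (aQ n)) (Complex.I * z)
    - Complex.I * z * (FS (aP n) (Complex.I * z)
      - Complex.log (Complex.I * z) * FS (aQ n) (Complex.I * z)))

lemma Iz_slit (z : ℝ) (hz : z ≠ 0) : Complex.I * z ∈ Complex.slitPlane := by
  rw [Complex.mem_slitPlane_iff]
  right
  simpa using hz

lemma hasDerivAt_Efun (n : ℕ) (z : ℝ) (hz : z ≠ 0) :
    HasDerivAt (fun u : ℝ => Efun (n + 1) u) (Tfun n z / z) z := by
  have hzc : (z : ℂ) ≠ 0 := by exact_mod_cast hz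
  have hw : Complex.I * z ≠ 0 := mul_ne_zero Complex.I_ne_zero hzc
  have hI : HasDerivAt (fun u : ℂ => Complex.I * u) Complex.I (z : ℂ) := by
    simpa using (hasDerivAt_id (z : ℂ)).const_mul Complex.I
  have hnI : HasDerivAt (fun u : ℂ => -Complex.I * u) (-Complex.I) (z : ℂ) := by
    simpa using (hasDerivAt_id (z : ℂ)).const_mul (-Complex.I)
  have hP := ((EntC_aP n).hasDerivAt _ hw).comp (z : ℂ) hI
  have hQ := ((EntC_aQ n).hasDerivAt _ hw).comp (z : ℂ) hI
  have hL := (Complex.hasDerivAt_log (Iz_slit z hz)).comp (z : ℂ) hI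
  have hE := hnI.cexp
  have h := (hE.mul (hP.sub (hL.mul hQ))).comp_ofReal
  have h2 : (fun u : ℝ => Efun (n + 1) u) = fun u : ℝ =>
    Complex.exp (-Complex.I * u) * (FS (aP n) (Complex.I * u)
      - Complex.log (Complex.I * u) * FS (aQ n) (Complex.I * u)) := by
    funext u; exact Efun_succ_eq n u
  rw [h2]
  refine h.congr_deriv ?_
  simp only [Tfun, Function.comp_def, Pi.mul_apply, Pi.sub_apply]
  have := Complex.I_ne_zero
  field_simp
  ring

lemma Tfun_succ (n : ℕ) (z : ℝ) :
    Tfun (n + 1) z = (n + 1) * Efun (n + 2) z - Efun (n + 1) z := by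
  rw [Efun_succ_eq (n + 1), Efun_succ_eq n, Tfun]
  set w := Complex.I * (z : ℂ)
  have hQ : FS (aQ n) w = (n + 1) * FS (aQ (n + 1)) w - FS (thC (aQ (n + 1))) w
      + w * FS (aQ (n + 1)) w := by
    refine ((EntC_aQ n).hasSum w).unique ?_
    have := ((((EntC_aQ (n + 1)).hasSum w).mul_left ((n : ℂ) + 1)).sub
      ((EntC_aQ (n + 1)).th.hasSum w)).add ((EntC_aQ (n + 1)).hasSum_sh w)
    refine this.congr' ?_
    intro m
    rw [R1Q n m, thC]; ring
  have hP : FS (aP n) w = (n + 1) * FS (aP (n + 1)) w - FS (thC (aP (n + 1))) w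
      + w * FS (aP (n + 1)) w + FS (aQ (n + 1)) w := by
    refine ((EntC_aP n).hasSum w).unique ?_
    have := (((((EntC_aP (n + 1)).hasSum w).mul_left ((n : ℂ) + 1)).sub
      ((EntC_aP (n + 1)).th.hasSum w)).add ((EntC_aP (n + 1)).hasSum_sh w)).add
      ((EntC_aQ (n + 1)).hasSum w)
    refine this.congr' ?_
    intro m
    rw [R1P n m, thC]; ring
  rw [hQ, hP]
  ring

lemma Tfun_zero (z : ℝ) : Tfun 0 z = - Efun 0 z := by
  rw [Tfun]
  simp only [Efun]
  set w := Complex.I * (z : ℂ)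
  have hQ : FS (thC (aQ 0)) w - w * FS (aQ 0) w = 0 := by
    refine HasSum.unique (((EntC_aQ 0).th.hasSum w).sub ((EntC_aQ 0).hasSum_sh w)) ?_
    refine hasSum_zero.congr' ?_
    intro m
    rw [thC, ← sub_mul, R0Q m, zero_mul]
  have hP : FS (thC (aP 0)) w - FS (aQ 0) w - w * FS (aP 0) w = -1 := by
    refine HasSum.unique ((((EntC_aP 0).th.hasSum w).sub ((EntC_aQ 0).hasSum w)).sub
      ((EntC_aP 0).hasSum_sh w)) ?_
    refine (hasSum_ite_eq 0 (-1 : ℂ)).congr' ?_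
    intro m
    rw [thC, ← sub_mul, ← sub_mul, R0P m]
    by_cases hm : m = 0 <;> simp [hm]
  linear_combination Complex.exp (-Complex.I * z) * (hP - Complex.log w * hQ)

/-- First-order relation for E of index n+1. -/
lemma Tfun_eq (n : ℕ) (z : ℝ) : Tfun n z = n * Efun (n + 1) z - Efun n z := by
  rcases n with _ | n
  · rw [Tfun_zero]; simp
  · rw [Tfun_succ]; push_cast; ring

lemma R2 (n : ℕ) (z : ℝ) :
    (n + 1) * Tfun (n + 1) z = Tfun n z + Complex.I * z * Efun (n + 1) z := by
  rw [Efun_succ_eq n, Tfun, Tfun]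
  set w := Complex.I * (z : ℂ)
  have hQ : (n + 1) * (FS (thC (aQ (n + 1))) w - w * FS (aQ (n + 1)) w) = FS (thC (aQ n)) w := by
    refine HasSum.unique ?_ ((EntC_aQ n).th.hasSum w)
    refine ((((EntC_aQ (n + 1)).th.hasSum w).sub ((EntC_aQ (n + 1)).hasSum_sh w)).mul_left
      ((n : ℂ) + 1)).congr' ?_
    intro m
    rw [thC, thC, ← R2Q n m]; ring
  have hP : (n + 1) * (FS (thC (aP (n + 1))) w - FS (aQ (n + 1)) w - w * FS (aP (n + 1)) w)
      = FS (thC (aP n)) w - FS (aQ n) w := by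
    refine HasSum.unique ?_ (((EntC_aP n).th.hasSum w).sub ((EntC_aQ n).hasSum w))
    refine (((((EntC_aP (n + 1)).th.hasSum w).sub ((EntC_aQ (n + 1)).hasSum w)).sub
      ((EntC_aP (n + 1)).hasSum_sh w)).mul_left ((n : ℂ) + 1)).congr' ?_
    intro m
    rw [thC, thC, ← sub_mul, ← R2P n m]; ring
  linear_combination Complex.exp (-Complex.I * z) * (hP - Complex.log w * hQ)

lemma three_term (n : ℕ) (z : ℝ) :
    ((n : ℂ) + 1) ^ 2 * Efun (n + 2) z
      = (2 * n + 1 + Complex.I * z) * Efun (n + 1) z - Efun n z := by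
  have h1 := R2 n z
  rw [Tfun_eq, Tfun_eq] at h1
  push_cast at h1
  linear_combination h1

lemma Efun_recursion (k : ℕ) (z : ℝ) (hz : z ≠ 0) :
    deriv (fun t : ℝ => (t : ℂ) * deriv (fun u : ℝ => Efun (k + 1) u) t) z
        = Complex.I * Efun k z := by
  have hev : (fun t : ℝ => (t : ℂ) * deriv (fun u : ℝ => Efun (k + 1) u) t) =ᶠ[nhds z]
      fun t : ℝ => k * Efun (k + 1) t - Efun k t := by
    filter_upwards [isOpen_ne.mem_nhds hz] with t ht
    have htc : (t : ℂ) ≠ 0 := by exact_mod_cast ht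
    rw [(hasDerivAt_Efun k t ht).deriv, ← Tfun_eq]
    field_simp
  have hzc : (z : ℂ) ≠ 0 := by exact_mod_cast hz
  rw [hev.deriv_eq]
  rcases k with _ | k
  · have h : HasDerivAt (fun u : ℝ => Efun 0 u) (-Complex.I * Efun 0 z) z := by
      have hnI : HasDerivAt (fun u : ℂ => -Complex.I * u) (-Complex.I) (z : ℂ) := by
        simpa using (hasDerivAt_id (z : ℂ)).const_mul (-Complex.I)
      have := hnI.cexp.comp_ofReal
      simp only [Efun]
      convert this using 1
      ring
    have h2 := h.neg
    simp only [Nat.cast_zero, zero_mul, zero_sub]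
    refine Eq.trans h2.deriv ?_
    ring
  · have h := ((hasDerivAt_Efun (k + 1) z hz).const_mul ((k + 1 : ℕ) : ℂ)).sub (hasDerivAt_Efun k z hz)
    refine Eq.trans h.deriv ?_
    have := R2 k z
    push_cast
    field_simp
    linear_combination this

open MeasureTheory Set Filter Topology

noncomputable def rC (s : ℝ) : ℂ := (s : ℂ) / (s + Complex.I)

lemma sI_ne (s : ℝ) : (s : ℂ) + Complex.I ≠ 0 := by
  intro h
  have := congrArg Complex.im h
  simp at this

lemma continuous_rC : Continuous rC := by
  unfold rC
  exact Complex.continuous_ofReal.div (by fun_prop) sI_ne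

lemma norm_rC_le (s : ℝ) : ‖rC s‖ ≤ 1 := by
  rw [rC, norm_div]
  apply div_le_one_of_le₀ _ (norm_nonneg _)
  have := Complex.abs_re_le_norm ((s : ℂ) + Complex.I)
  simpa using this

lemma hasDerivAt_rC (s : ℝ) : HasDerivAt rC (-Complex.I * (1 - rC s) ^ 2) s := by
  have h1 : HasDerivAt (fun u : ℂ => u / (u + Complex.I))
      ((1 * ((s : ℂ) + Complex.I) - s * 1) / ((s : ℂ) + Complex.I) ^ 2) (s : ℂ) :=
    (hasDerivAt_id (s : ℂ)).div ((hasDerivAt_id (s : ℂ)).add_const Complex.I) (sI_ne s)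
  refine h1.comp_ofReal.congr_deriv ?_
  have := sI_ne s
  rw [rC]
  field_simp
  linear_combination Complex.I_sq

noncomputable def kM (z : ℝ) (n : ℕ) (s : ℝ) : ℂ :=
  Complex.exp (-(z : ℂ) * (s + Complex.I)) * rC s ^ n

lemma norm_expk (z s : ℝ) : ‖Complex.exp (-(z : ℂ) * (s + Complex.I))‖ = Real.exp (-z * s) := by
  rw [Complex.norm_exp]
  simp

lemma norm_kM_le (z : ℝ) (n : ℕ) (s : ℝ) : ‖kM z n s‖ ≤ Real.exp (-z * s) := by
  rw [kM, norm_mul, norm_expk, norm_pow]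
  exact mul_le_of_le_one_right (Real.exp_pos _).le (pow_le_one₀ (norm_nonneg _) (norm_rC_le s))

lemma continuous_kM (z : ℝ) (n : ℕ) : Continuous (kM z n) := by
  have := continuous_rC
  unfold kM
  fun_prop

lemma integrable_kM (z : ℝ) (hz : 0 < z) (n : ℕ) : IntegrableOn (kM z n) (Ioi 0) :=
  Integrable.mono' (exp_neg_integrableOn_Ioi 0 hz) (continuous_kM z n).aestronglyMeasurable
    (Eventually.of_forall (norm_kM_le z n))

noncomputable def MM (n : ℕ) (z : ℝ) : ℂ := ∫ s in Ioi (0 : ℝ), kM z n s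

lemma norm_MM_le (n : ℕ) (z : ℝ) (hz : 1 ≤ z) : ‖MM n z‖ ≤ 1 := by
  have hz0 : 0 < z := by linarith
  have h := norm_integral_le_of_norm_le (μ := volume.restrict (Ioi (0:ℝ)))
    (exp_neg_integrableOn_Ioi 0 hz0) (Eventually.of_forall (norm_kM_le z n))
  refine h.trans ?_
  have h2 := integral_exp_mul_Ioi (a := -z) (by linarith) 0
  rw [h2]
  simp only [mul_zero, Real.exp_zero]
  rw [neg_div_neg_eq]
  exact (div_le_one hz0).2 hz

lemma tendsto_kM (z : ℝ) (hz : 0 < z) (n : ℕ) : Tendsto (kM z n) atTop (𝓝 0) := by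
  apply squeeze_zero_norm (norm_kM_le z n)
  have : Tendsto (fun s : ℝ => z * s) atTop atTop := tendsto_id.const_mul_atTop hz
  have h := Real.tendsto_exp_neg_atTop_nhds_zero.comp this
  refine h.congr (fun s => ?_)
  simp

lemma hasDerivAt_expk (z s : ℝ) : HasDerivAt (fun s : ℝ => Complex.exp (-(z : ℂ) * (s + Complex.I)))
    (Complex.exp (-(z : ℂ) * (s + Complex.I)) * (-(z : ℂ))) s := by
  have h1 : HasDerivAt (fun u : ℂ => -(z : ℂ) * (u + Complex.I)) (-(z : ℂ)) (s : ℂ) := by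
    simpa using ((hasDerivAt_id (s : ℂ)).add_const Complex.I).const_mul (-(z : ℂ))
  exact h1.cexp.comp_ofReal

lemma MM_zero (z : ℝ) (hz : 0 < z) : z * MM 0 z = Complex.exp (-Complex.I * z) := by
  have h := integral_Ioi_of_hasDerivAt_of_tendsto (a := (0:ℝ)) (f := kM z 0)
    (f' := fun s => -(z : ℂ) * kM z 0 s) (continuous_kM z 0).continuousWithinAt
    (fun s _ => by
      have := hasDerivAt_expk z s
      have h2 : kM z 0 = fun s : ℝ => Complex.exp (-(z : ℂ) * (s + Complex.I)) := by
        funext s; simp [kM]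
      rw [h2]
      exact this.congr_deriv (mul_comm _ _)) ((integrable_kM z hz 0).const_mul _) (tendsto_kM z hz 0)
  rw [integral_const_mul] at h
  unfold MM
  rw [show Complex.exp (-Complex.I * z) = kM z 0 0 by simp [kM]; ring_nf]
  linear_combination -h

lemma MM_succ (n : ℕ) (z : ℝ) (hz : 0 < z) : z * MM (n + 1) z =
    -Complex.I * (n + 1) * (MM n z - 2 * MM (n + 1) z + MM (n + 2) z) := by
  have i0 := integrable_kM z hz n
  have i1 := integrable_kM z hz (n + 1)
  have i2 := integrable_kM z hz (n + 2)
  have h := integral_Ioi_of_hasDerivAt_of_tendsto (a := (0:ℝ)) (f := kM z (n + 1))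
    (f' := fun s => -(z : ℂ) * kM z (n + 1) s +
      (-Complex.I * (n + 1)) * ((kM z n s - 2 * kM z (n + 1) s) + kM z (n + 2) s))
    (continuous_kM z (n + 1)).continuousWithinAt
    (fun s _ => by
      have := (hasDerivAt_expk z s).mul ((hasDerivAt_rC s).pow (n + 1))
      refine this.congr_deriv ?_
      simp only [kM, Nat.add_sub_cancel, Pi.pow_apply]
      push_cast
      ring)
    ((i1.const_mul _).add (((i0.sub (i1.const_mul _)).add i2).const_mul _)) (tendsto_kM z hz (n + 1))
  have j1 : IntegrableOn (fun s => -(z : ℂ) * kM z (n + 1) s) (Ioi 0) := i1.const_mul _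
  have j2 : IntegrableOn (fun s => 2 * kM z (n + 1) s) (Ioi 0) := i1.const_mul _
  have j3 : IntegrableOn (fun s => kM z n s - 2 * kM z (n + 1) s) (Ioi 0) := i0.sub j2
  have j4 : IntegrableOn (fun s => (kM z n s - 2 * kM z (n + 1) s) + kM z (n + 2) s) (Ioi 0) :=
    j3.add i2
  have j5 : IntegrableOn (fun s => (-Complex.I * (n + 1)) *
    ((kM z n s - 2 * kM z (n + 1) s) + kM z (n + 2) s)) (Ioi 0) := j4.const_mul _
  rw [integral_add j1 j5, integral_const_mul, integral_const_mul, integral_add j3 i2,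
    integral_sub i0 j2, integral_const_mul] at h
  have h0 : kM z (n + 1) 0 = 0 := by simp [kM, rC]
  rw [h0] at h
  unfold MM
  linear_combination -h

noncomputable def AA (n : ℕ) (z : ℝ) : ℂ := -Complex.I * (MM n z - MM (n + 1) z)

lemma norm_AA_le (n : ℕ) (z : ℝ) (hz : 1 ≤ z) : ‖AA n z‖ ≤ 2 := by
  rw [AA, norm_mul, norm_neg, Complex.norm_I, one_mul]
  refine (norm_sub_le _ _).trans ?_
  linarith [norm_MM_le n z hz, norm_MM_le (n + 1) z hz]

lemma AA_one (z : ℝ) (hz : 0 < z) :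
    AA 1 z = (1 + Complex.I * z) * AA 0 z - Complex.exp (-Complex.I * z) := by
  rw [← MM_zero z hz]
  have h1 := MM_succ 0 z hz
  unfold AA
  push_cast at *
  linear_combination h1 + (z * (MM 0 z - MM 1 z)) * Complex.I_sq

lemma AA_rec (n : ℕ) (z : ℝ) (hz : 0 < z) :
    (n + 2) * AA (n + 2) z = (2 * (n + 1) + 1 + Complex.I * z) * AA (n + 1) z - (n + 1) * AA n z := by
  have h1 := MM_succ n z hz
  have h2 := MM_succ (n + 1) z hz
  unfold AA
  push_cast at *
  linear_combination h2 - h1 + (z * (MM (n + 1) z - MM (n + 2) z)) * Complex.I_sq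

lemma Efun_eq_AA (z : ℝ) (hz : 0 < z) (h1 : Efun 1 z = AA 0 z) (n : ℕ) :
    (n.factorial : ℂ) * Efun (n + 1) z = AA n z ∧
      ((n + 1).factorial : ℂ) * Efun (n + 2) z = AA (n + 1) z := by
  induction n with
  | zero =>
    have := three_term 0 z
    have h2 := AA_one z hz
    simp only [Nat.factorial, Nat.cast_one, one_mul, zero_add, h1, true_and]
    simp only [Nat.cast_zero, zero_add, one_pow, one_mul, h1, mul_zero] at this
    simp only [mul_one, Nat.cast_one, one_mul]
    rw [this, h2]
    simp only [Efun]
  | succ n ih =>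
    refine ⟨ih.2, ?_⟩
    have h3 := three_term (n + 1) z
    have h4 := AA_rec n z hz
    have hn : (n : ℂ) + 2 ≠ 0 := by exact_mod_cast (n + 1).succ_ne_zero
    apply mul_left_cancel₀ hn
    rw [show n + 1 + 1 = n + 2 by ring, h4, ← ih.1, ← ih.2]
    rw [Nat.factorial_succ (n + 1), Nat.factorial_succ n]
    push_cast at *
    linear_combination (n + 1) * (n.factorial : ℂ) * h3

lemma MellinConv_log : IntegrableOn (fun t : ℝ => Real.exp (-t) * |Real.log t|) (Ioi 0) := by
  have h := (mellin_hasDerivAt_of_isBigO_rpow (E := ℂ) (f := fun t : ℝ => ((Real.exp (-t) : ℝ) : ℂ))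
    (s := 1) (a := 2) (b := 0) ?_ ?_ (by simp) ?_ (by simp)).1
  · have h2 := h.norm
    refine h2.congr ?_
    filter_upwards [ae_restrict_mem measurableSet_Ioi] with t ht
    simp [Complex.norm_exp]
    ring
  · refine (Continuous.continuousOn ?_).locallyIntegrableOn measurableSet_Ioi
    exact Complex.continuous_ofReal.comp (Real.continuous_exp.comp continuous_neg)
  · rw [← Asymptotics.isBigO_norm_left]
    simp_rw [Complex.norm_real, Asymptotics.isBigO_norm_left]
    simpa only [neg_one_mul] using (isLittleO_exp_neg_mul_rpow_atTop zero_lt_one _).isBigO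
  · rw [neg_zero]
    simp only [Real.rpow_zero]
    refine Asymptotics.IsBigO.of_bound 1 ?_
    filter_upwards [self_mem_nhdsWithin] with t ht
    have : Real.exp (-t) ≤ 1 := Real.exp_le_one_iff.2 (by simpa using (le_of_lt ht))
    simpa [Complex.norm_exp] using ht.le

lemma integral_exp_log :
    ∫ t : ℝ in Ioi 0, (Real.exp (-t) : ℂ) * Complex.log t = -(Real.eulerMascheroniConstant : ℂ) := by
  have h1 := Complex.hasDerivAt_GammaIntegral (s := 1) (by simp)
  have h2 : HasDerivAt Complex.Gamma _ 1 := h1.congr_of_eventuallyEq (by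
    have : IsOpen {s : ℂ | 0 < s.re} := isOpen_lt continuous_const Complex.continuous_re
    filter_upwards [this.mem_nhds (by simp : (0:ℝ) < (1:ℂ).re)] with s hs
    exact Complex.Gamma_eq_integral hs)
  rw [← h2.unique Complex.hasDerivAt_Gamma_one]
  refine setIntegral_congr_fun measurableSet_Ioi (fun t ht => ?_)
  simp only [sub_self, Complex.cpow_zero, one_mul]
  rw [Complex.ofReal_log (le_of_lt ht)]
  ring

noncomputable def lbd (u : ℝ) : ℝ := Real.exp (-u) * |Real.log u| + Real.exp (-u) * u
  + Real.pi * Real.exp (-u)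

lemma lbd_int : IntegrableOn lbd (Ioi 0) := by
  have h1 : IntegrableOn (fun u : ℝ => Real.exp (-u)) (Ioi 0) := by
    simpa using exp_neg_integrableOn_Ioi 0 one_pos
  have h2 : IntegrableOn (fun u : ℝ => Real.exp (-u) * u) (Ioi 0) := by
    have := Real.GammaIntegral_convergent (s := 2) (by norm_num)
    refine this.congr_fun (fun u hu => ?_) measurableSet_Ioi
    norm_num
  exact (MellinConv_log.add h2).add (h1.const_mul _)

lemma norm_log_le (w : ℂ) : ‖Complex.log w‖ ≤ |Real.log ‖w‖| + Real.pi := by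
  refine (Complex.norm_le_abs_re_add_abs_im _).trans ?_
  rw [Complex.log_re, Complex.log_im]
  gcongr
  exact Complex.abs_arg_le_pi w

noncomputable def uz (u z : ℝ) : ℂ := (u : ℂ) + Complex.I * z

lemma norm_uz (u z : ℝ) (hu : 0 < u) (hz : 0 < z) (hz1 : z ≤ 1) :
    ‖Complex.log (uz u z)‖ ≤ |Real.log u| + u + Real.pi := by
  refine (norm_log_le _).trans ?_
  gcongr
  have h1 : u ≤ ‖uz u z‖ := by
    have := Complex.abs_re_le_norm (uz u z)
    simp only [uz] at *
    simpa [abs_of_pos hu] using this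
  have h2 : ‖uz u z‖ ≤ u + 1 := by
    refine (norm_add_le _ _).trans ?_
    simp [abs_of_pos hu, abs_of_pos hz, hz1]
  have h3 : Real.log u ≤ Real.log ‖uz u z‖ := Real.log_le_log hu h1
  have h4 : Real.log ‖uz u z‖ ≤ u := by
    have := Real.log_le_sub_one_of_pos (lt_of_lt_of_le hu h1)
    linarith
  rw [abs_le]
  constructor
  · linarith [neg_abs_le (Real.log u)]
  · linarith [abs_nonneg (Real.log u)]

noncomputable def gl (z u : ℝ) : ℂ := (Real.exp (-u) : ℂ) * Complex.log (uz u z)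

lemma uz_slit (u z : ℝ) (hz : 0 < z) : uz u z ∈ Complex.slitPlane := by
  rw [Complex.mem_slitPlane_iff]
  right
  simpa [uz] using hz.ne'

lemma hasDerivAt_gl (z u : ℝ) (hz : 0 < z) :
    HasDerivAt (gl z) (-gl z u + (Real.exp (-u) : ℂ) / uz u z) u := by
  have h1 : HasDerivAt (fun u : ℂ => Complex.exp (-u)) (-Complex.exp (-(u : ℂ))) (u : ℂ) := by
    simpa using (hasDerivAt_neg (u : ℂ)).cexp
  have h2 : HasDerivAt (fun v : ℂ => v + Complex.I * z) 1 (u : ℂ) :=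
    (hasDerivAt_id (u : ℂ)).add_const _
  have h3 := (h1.mul (h2.clog (uz_slit u z hz))).comp_ofReal
  have h4 : gl z = fun u : ℝ => Complex.exp (-(u : ℂ)) * Complex.log ((u : ℂ) + Complex.I * z) := by
    funext u; simp [gl, uz]
  rw [h4]
  refine h3.congr_deriv ?_
  simp [uz]
  ring

lemma continuous_gl (z : ℝ) (hz : 0 < z) : Continuous (gl z) :=
  continuous_iff_continuousAt.2 (fun u => (hasDerivAt_gl z u hz).continuousAt)

lemma norm_gl_le (z u : ℝ) (hu : 0 < u) (hz : 0 < z) (hz1 : z ≤ 1) : ‖gl z u‖ ≤ lbd u := by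
  rw [gl, norm_mul, Complex.norm_real, Real.norm_of_nonneg (Real.exp_pos _).le]
  calc _ ≤ Real.exp (-u) * (|Real.log u| + u + Real.pi) := by
        gcongr; exact norm_uz u z hu hz hz1
    _ = _ := by unfold lbd; ring

lemma integrable_gl (z : ℝ) (hz : 0 < z) (hz1 : z ≤ 1) : IntegrableOn (gl z) (Ioi 0) := by
  refine Integrable.mono' lbd_int (continuous_gl z hz).aestronglyMeasurable ?_
  filter_upwards [ae_restrict_mem measurableSet_Ioi] with u hu
  exact norm_gl_le z u hu hz hz1

lemma uz_ne (u z : ℝ) (hz : 0 < z) : uz u z ≠ 0 := Complex.slitPlane_ne_zero (uz_slit u z hz)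

lemma integrable_Bk (z : ℝ) (hz : 0 < z) :
    IntegrableOn (fun u : ℝ => (Real.exp (-u) : ℂ) / uz u z) (Ioi 0) := by
  have h1 : IntegrableOn (fun u : ℝ => Real.exp (-u)) (Ioi 0) := by
    simpa using exp_neg_integrableOn_Ioi 0 one_pos
  refine Integrable.mono' (h1.mul_const z⁻¹) ?_ (Eventually.of_forall fun u => ?_)
  · refine Continuous.aestronglyMeasurable ?_
    refine Continuous.div (by fun_prop) (by unfold uz; fun_prop) (fun u => uz_ne u z hz)
  · rw [norm_div, Complex.norm_real, Real.norm_of_nonneg (Real.exp_pos _).le, div_eq_mul_inv]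
    have : z ≤ ‖uz u z‖ := by
      have := Complex.abs_im_le_norm (uz u z)
      simp only [uz] at *
      simpa [abs_of_pos hz] using this
    gcongr

lemma IBP_B (z : ℝ) (hz : 0 < z) (hz1 : z ≤ 1) :
    (∫ u in Ioi (0:ℝ), (Real.exp (-u) : ℂ) / uz u z) + Complex.log (Complex.I * z)
      = ∫ u in Ioi (0:ℝ), gl z u := by
  have i1 := integrable_gl z hz hz1
  have i2 := integrable_Bk z hz
  have i3 : IntegrableOn (fun u => -gl z u) (Ioi 0) := i1.neg
  have i4 : IntegrableOn (fun u => -gl z u + (Real.exp (-u) : ℂ) / uz u z) (Ioi 0) := i3.add i2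
  have h := integral_Ioi_of_hasDerivAt_of_tendsto (continuous_gl z hz).continuousWithinAt
    (fun u _ => hasDerivAt_gl z u hz) i4
    (tendsto_zero_of_hasDerivAt_of_integrableOn_Ioi (fun u _ => hasDerivAt_gl z u hz) i4 i1)
  rw [integral_add i3 i2, integral_neg] at h
  have h0 : gl z 0 = Complex.log (Complex.I * z) := by simp [gl, uz]
  rw [h0] at h
  linear_combination h

lemma tendsto_gl : Tendsto (fun z : ℝ => ∫ u in Ioi (0:ℝ), gl z u) (𝓝[>] 0)
    (𝓝 (-(Real.eulerMascheroniConstant : ℂ))) := by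
  rw [← integral_exp_log]
  refine tendsto_integral_filter_of_dominated_convergence lbd ?_ ?_ lbd_int ?_
  · filter_upwards [self_mem_nhdsWithin] with z hz
    exact (continuous_gl z hz).aestronglyMeasurable
  · filter_upwards [Ioc_mem_nhdsGT (zero_lt_one' ℝ)] with z hz
    filter_upwards [ae_restrict_mem measurableSet_Ioi] with u hu
    exact norm_gl_le z u hu hz.1 hz.2
  · filter_upwards [ae_restrict_mem measurableSet_Ioi] with u hu
    have hc : ContinuousAt (fun z : ℝ => gl z u) 0 := by
      unfold gl
      refine continuousAt_const.mul (ContinuousAt.clog (by unfold uz; fun_prop) ?_)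
      rw [Complex.mem_slitPlane_iff]
      left
      simpa [uz] using hu
    have : Tendsto (fun z : ℝ => gl z u) (𝓝[>] 0) (𝓝 (gl 0 u)) := hc.tendsto.mono_left nhdsWithin_le_nhds
    simpa [gl, uz] using this

lemma kM_diff (z s : ℝ) : -Complex.I * (kM z 0 s - kM z (0 + 1) s) =
    Complex.exp (-(z : ℂ) * (s + Complex.I)) / (s + Complex.I) := by
  have := sI_ne s
  have h : -Complex.I * (1 - rC s) = 1 / (s + Complex.I) := by
    rw [rC]
    field_simp
    linear_combination -Complex.I_sq
  simp only [kM, pow_zero, zero_add, pow_one]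
  rw [div_eq_mul_one_div, ← h]
  ring

lemma AA_zero_eq (z : ℝ) (hz : 0 < z) :
    AA 0 z = ∫ s in Ioi (0:ℝ), Complex.exp (-(z : ℂ) * (s + Complex.I)) / (s + Complex.I) := by
  rw [AA, MM, MM, ← integral_sub (integrable_kM z hz 0) (integrable_kM z hz _), ← integral_const_mul]
  congr 1
  funext s
  exact kM_diff z s

lemma AA_zero_eq_B (z : ℝ) (hz : 0 < z) :
    AA 0 z = Complex.exp (-Complex.I * z) * ∫ u in Ioi (0:ℝ), (Real.exp (-u) : ℂ) / uz u z := by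
  have h := integral_comp_mul_left_Ioi' (fun u : ℝ => (Real.exp (-u) : ℂ) / uz u z) 0 hz
  rw [mul_zero] at h
  rw [← h, AA_zero_eq z hz, ← integral_smul, ← integral_const_mul]
  congr 1
  funext s
  have := sI_ne s
  have hzc : (z : ℂ) ≠ 0 := by exact_mod_cast hz.ne'
  have h3 : uz (z * s) z = z * (s + Complex.I) := by simp [uz]; ring
  rw [h3, mul_add, Complex.exp_add]
  simp only [Complex.real_smul]
  push_cast
  rw [show -(z : ℂ) * Complex.I = -Complex.I * z by ring, show -(z : ℂ) * s = -(z * s) by ring]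
  field_simp

lemma hasDerivAt_AA (z : ℝ) (hz : 0 < z) :
    HasDerivAt (AA 0) (-Complex.exp (-Complex.I * z) / z) z := by
  have hzc : (z : ℂ) ≠ 0 := by exact_mod_cast hz.ne'
  have key := (hasDerivAt_integral_of_dominated_loc_of_deriv_le (𝕜 := ℝ)
    (μ := volume.restrict (Ioi (0:ℝ))) (x₀ := z)
    (F := fun (y : ℝ) (s : ℝ) => Complex.exp (-(y : ℂ) * (s + Complex.I)) / (s + Complex.I))
    (F' := fun y s => - kM y 0 s) (bound := fun s => Real.exp (-(z / 2) * s))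
    (s := Ioi (z / 2)) (Ioi_mem_nhds (by linarith)) ?_ ?_ ?_ ?_
    (exp_neg_integrableOn_Ioi 0 (by linarith)) ?_).2
  · have h2 : HasDerivAt (AA 0) (∫ s in Ioi (0:ℝ), - kM z 0 s) z := by
      refine key.congr_of_eventuallyEq ?_
      filter_upwards [Ioi_mem_nhds hz] with y hy
      exact AA_zero_eq y hy
    refine h2.congr_deriv ?_
    rw [integral_neg, ← MM_zero z hz, MM]
    field_simp
  · refine Eventually.of_forall fun y => Continuous.aestronglyMeasurable ?_
    exact Continuous.div (by fun_prop) (by fun_prop) sI_ne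
  · have h := ((integrable_kM z hz 0).sub (integrable_kM z hz 1)).const_mul (-Complex.I)
    refine h.congr (Eventually.of_forall fun s => ?_)
    exact kM_diff z s
  · exact (continuous_kM z 0).neg.aestronglyMeasurable
  · filter_upwards [ae_restrict_mem measurableSet_Ioi] with s hs y hy
    rw [norm_neg]
    refine (norm_kM_le y 0 s).trans ?_
    have hs' : (0:ℝ) < s := hs
    have hy' : z / 2 < y := hy
    apply Real.exp_le_exp.2
    nlinarith
  · refine Eventually.of_forall fun s y _ => ?_
    have h1 : HasDerivAt (fun v : ℂ => -v * (s + Complex.I)) (-(s + Complex.I)) (y : ℂ) := by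
      simpa using (hasDerivAt_neg (y : ℂ)).mul_const ((s : ℂ) + Complex.I)
    refine (h1.cexp.div_const ((s : ℂ) + Complex.I)).comp_ofReal.congr_deriv ?_
    have := sI_ne s
    simp only [kM, pow_zero, mul_one]
    field_simp

lemma EntC.tail {a : ℕ → ℂ} (h : EntC a) : EntC (fun m => a (m + 1)) := by
  obtain ⟨C, R, hC, hR, h⟩ := h
  refine ⟨C * R, R, by positivity, hR, fun m => (h (m + 1)).trans ?_⟩
  have : (m.factorial : ℝ) ≤ (m + 1).factorial := by exact_mod_cast Nat.factorial_le (Nat.le_succ m)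
  calc C * (R ^ (m + 1) / ((m + 1).factorial : ℝ)) ≤ C * (R ^ (m + 1) / (m.factorial : ℝ)) := by
        gcongr
    _ = _ := by ring

lemma FS_tail {a : ℕ → ℂ} (h : EntC a) (w : ℂ) :
    FS a w = a 0 + w * FS (fun m => a (m + 1)) w := by
  have h1 := h.tail.hasSum_sh w
  have h2 := (hasSum_ite_eq 0 (a 0)).add h1
  refine (h.hasSum w).unique (h2.congr' ?_)
  intro m
  rcases m with _ | m
  · simp [shC]
  · simp [shC]

lemma FS_near {a : ℕ → ℂ} (h : EntC a) : ∃ B : ℝ, 0 ≤ B ∧ ∀ z : ℝ, 0 < z → z ≤ 1 →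
    ‖FS a (Complex.I * z) - a 0‖ ≤ B * z := by
  obtain ⟨B, hB, hb⟩ := h.tail.bound
  refine ⟨B, hB, fun z hz hz1 => ?_⟩
  have hn : ‖Complex.I * (z : ℂ)‖ = z := by simp [abs_of_pos hz]
  rw [FS_tail h, add_sub_cancel_left, norm_mul, hn, mul_comm]
  gcongr
  exact hb _ (by rw [hn]; exact hz1)

lemma tendsto_E1 : Tendsto (fun z : ℝ => Complex.exp (Complex.I * z) * Efun 1 z
    + Complex.log (Complex.I * z)) (𝓝[>] 0) (𝓝 (-(Real.eulerMascheroniConstant : ℂ))) := by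
  obtain ⟨B1, hB1, h1⟩ := FS_near (EntC_aP 0)
  obtain ⟨B2, hB2, h2⟩ := FS_near (EntC_aQ 0)
  have ha : aP 0 0 = -(Real.eulerMascheroniConstant : ℂ) := by simp [aP, aQ, dC]
  have hq : aQ 0 0 = 1 := by simp [aQ]
  rw [ha] at h1
  rw [hq] at h2
  rw [tendsto_iff_norm_sub_tendsto_zero]
  have hlim : Tendsto (fun z : ℝ => B1 * z + (|Real.log z * z| + Real.pi * z) * B2) (𝓝[>] 0) (𝓝 0) := by
    have hid : Tendsto (fun z : ℝ => z) (𝓝[>] 0) (𝓝 0) := tendsto_id.mono_left nhdsWithin_le_nhds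
    have hl : Tendsto (fun z : ℝ => Real.log z * z) (𝓝[>] 0) (𝓝 0) := by
      simpa only [Real.rpow_one] using tendsto_log_mul_rpow_nhdsGT_zero zero_lt_one
    have := (hid.const_mul B1).add ((hl.abs.add (hid.const_mul Real.pi)).mul_const B2)
    simpa using this
  refine squeeze_zero' (Eventually.of_forall fun z => norm_nonneg _) ?_ hlim
  filter_upwards [Ioc_mem_nhdsGT (zero_lt_one' ℝ)] with z hz
  have he : Complex.exp (Complex.I * z) * Complex.exp (-Complex.I * z) = 1 := by
    rw [← Complex.exp_add]; simp
  have hE := Efun_succ_eq 0 z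
  rw [zero_add] at hE
  have : Complex.exp (Complex.I * z) * Efun 1 z + Complex.log (Complex.I * z)
      - -(Real.eulerMascheroniConstant : ℂ) =
      (FS (aP 0) (Complex.I * z) - -(Real.eulerMascheroniConstant : ℂ))
      - Complex.log (Complex.I * z) * (FS (aQ 0) (Complex.I * z) - 1) := by
    rw [hE, ← mul_assoc, he]; ring
  rw [this]
  refine (norm_sub_le _ _).trans ?_
  rw [norm_mul]
  have hn : ‖Complex.I * (z : ℂ)‖ = z := by simp [abs_of_pos hz.1]
  have hl := norm_log_le (Complex.I * z)
  rw [hn] at hl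
  calc _ ≤ B1 * z + (|Real.log z| + Real.pi) * (B2 * z) := by
        gcongr
        · exact h1 z hz.1 hz.2
        · exact h2 z hz.1 hz.2
    _ = _ := by rw [abs_mul, abs_of_pos hz.1]; ring

lemma tendsto_AA : Tendsto (fun z : ℝ => Complex.exp (Complex.I * z) * AA 0 z
    + Complex.log (Complex.I * z)) (𝓝[>] 0) (𝓝 (-(Real.eulerMascheroniConstant : ℂ))) := by
  refine tendsto_gl.congr' ?_
  filter_upwards [Ioc_mem_nhdsGT (zero_lt_one' ℝ)] with z hz
  have he : Complex.exp (Complex.I * z) * Complex.exp (-Complex.I * z) = 1 := by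
    rw [← Complex.exp_add]; simp
  rw [← IBP_B z hz.1 hz.2, AA_zero_eq_B z hz.1, ← mul_assoc, he, one_mul]

lemma E1_eq (z : ℝ) (hz : 0 < z) : Efun 1 z = AA 0 z := by
  have hd : ∀ y ∈ Ioi (0:ℝ), HasDerivAt (fun y => Efun 1 y - AA 0 y) 0 y := by
    intro y hy
    have h1 := (hasDerivAt_Efun 0 y (ne_of_gt hy)).sub (hasDerivAt_AA y hy)
    refine h1.congr_deriv ?_
    rw [Tfun_zero]
    simp [Efun]
  have hconst : ∀ y ∈ Ioi (0:ℝ), Efun 1 y - AA 0 y = Efun 1 z - AA 0 z := by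
    intro y hy
    exact isOpen_Ioi.is_const_of_deriv_eq_zero isPreconnected_Ioi
      (fun x hx => (hd x hx).differentiableAt.differentiableWithinAt)
      (fun x hx => (hd x hx).deriv) hy hz
  have h := tendsto_E1.sub tendsto_AA
  rw [sub_self] at h
  have hexp : Tendsto (fun y : ℝ => Complex.exp (Complex.I * y) * (Efun 1 z - AA 0 z)) (𝓝[>] 0)
      (𝓝 (Efun 1 z - AA 0 z)) := by
    have hc : Continuous (fun y : ℝ => Complex.exp (Complex.I * y) * (Efun 1 z - AA 0 z)) := by
      fun_prop
    have := hc.tendsto 0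
    simp only [Complex.ofReal_zero, mul_zero, Complex.exp_zero, one_mul] at this
    exact this.mono_left nhdsWithin_le_nhds
  have h0 : Tendsto (fun y : ℝ => Complex.exp (Complex.I * y) * (Efun 1 z - AA 0 z)) (𝓝[>] 0)
      (𝓝 0) := by
    refine h.congr' ?_
    filter_upwards [self_mem_nhdsWithin] with y hy
    rw [← hconst y hy]; ring
  exact sub_eq_zero.1 (tendsto_nhds_unique hexp h0)

lemma Efun_bound_large (n : ℕ) (z : ℝ) (hz : 1 ≤ z) : ‖Efun (n + 1) z‖ ≤ 2 := by
  have hz0 : 0 < z := by linarith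
  have h := (Efun_eq_AA z hz0 (E1_eq z hz0) n).1
  have h2 := norm_AA_le n z hz
  rw [← h, norm_mul, Complex.norm_natCast] at h2
  have : (1:ℝ) ≤ n.factorial := by exact_mod_cast Nat.factorial_pos n
  nlinarith [norm_nonneg (Efun (n + 1) z)]

lemma conj_FS {a : ℕ → ℂ} (h : ∀ m, (starRingEnd ℂ) (a m) = a m) (w : ℂ) :
    (starRingEnd ℂ) (FS a w) = FS a ((starRingEnd ℂ) w) := by
  unfold FS
  rw [Complex.conj_tsum]
  congr 1
  funext m
  rw [map_mul, map_pow, h]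

lemma Efun_neg (n : ℕ) (z : ℝ) (hz : z ≠ 0) :
    Efun (n + 1) (-z) = (starRingEnd ℂ) (Efun (n + 1) z) := by
  have hQ : ∀ m, (starRingEnd ℂ) (aQ n m) = aQ n m := by
    intro m; simp [aQ]
  have hP : ∀ m, (starRingEnd ℂ) (aP n m) = aP n m := by
    intro m
    rw [aP, map_mul, hQ]
    simp only [dC, map_sub, map_add, map_neg, map_mul, Complex.conj_ofReal, map_ratCast, map_ofNat]
  have hw : (starRingEnd ℂ) (Complex.I * z) = Complex.I * ((-z : ℝ) : ℂ) := by simp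
  rw [Efun_succ_eq, Efun_succ_eq, map_mul, map_sub, map_mul, conj_FS hP, conj_FS hQ,
    ← Complex.exp_conj, ← Complex.log_conj _ (Complex.slitPlane_arg_ne_pi (Iz_slit z hz)), hw]
  simp

lemma Efun_bound (k : ℕ) : ∃ c : ℝ, ∀ z : ℝ, z ≠ 0 → ‖Efun k z‖ ≤ c * (1 + lnp (1 / |z|)) := by
  have hl0 : ∀ x, 0 ≤ lnp x := fun x => le_max_right _ _
  rcases k with _ | n
  · refine ⟨1, fun z _ => ?_⟩
    have : ‖Efun 0 z‖ = 1 := by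
      simp [Efun, Complex.norm_exp]
    rw [this]
    linarith [hl0 (1 / |z|)]
  · obtain ⟨B1, hB1, h1⟩ := (EntC_aP n).bound
    obtain ⟨B2, hB2, h2⟩ := (EntC_aQ n).bound
    have hpi := Real.pi_pos
    refine ⟨2 + B1 + (1 + Real.pi) * B2, fun z hz => ?_⟩
    have hpos : 0 < |z| := abs_pos.2 hz
    rcases le_total 1 |z| with hz1 | hz1
    · have h2 : ‖Efun (n + 1) z‖ ≤ 2 := by
        rcases lt_or_gt_of_ne hz with h | h
        · have e := Efun_neg n (-z) (neg_ne_zero.2 hz)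
          rw [neg_neg] at e
          rw [e, RCLike.norm_conj]
          rw [abs_of_neg h] at hz1
          exact Efun_bound_large n (-z) hz1
        · rw [abs_of_pos h] at hz1
          exact Efun_bound_large n z hz1
      have := hl0 (1 / |z|)
      have h3 : 0 ≤ (1 + Real.pi) * B2 := by positivity
      nlinarith
    · have hlog : lnp (1 / |z|) = |Real.log (|z|)| := by
        have : Real.log |z| ≤ 0 := Real.log_nonpos hpos.le hz1
        rw [lnp, one_div, Real.log_inv, abs_of_nonpos this, max_eq_left (by linarith)]
      have hn : ‖Complex.I * (z : ℂ)‖ = |z| := by simp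
      have hl := norm_log_le (Complex.I * z)
      rw [hn, ← hlog] at hl
      have he : ‖Complex.exp (-Complex.I * z)‖ = 1 := by simp [Complex.norm_exp]
      rw [Efun_succ_eq, norm_mul, he, one_mul]
      refine (norm_sub_le _ _).trans ?_
      rw [norm_mul]
      have hx := hl0 (1 / |z|)
      calc _ ≤ B1 + (lnp (1 / |z|) + Real.pi) * B2 := by
            gcongr
            · exact h1 _ (by rw [hn]; exact hz1)
            · exact h2 _ (by rw [hn]; exact hz1)
        _ ≤ _ := by
            have a1 : 0 ≤ lnp (1 / |z|) * B1 := by positivity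
            have a2 : 0 ≤ lnp (1 / |z|) * (Real.pi * B2) := by positivity
            nlinarith

/-- Lemma (Exponential integral estimates): the recursion `∂_z(z ∂_z E_{k+1}(z)) = i E_k(z)`
holds, and there is a constant `c` depending only on `k` such that
`|E_k(z)| ≤ c (1 + ln₊(1/|z|))` for all real `z ≠ 0`. -/
theorem Efun_recursion_and_bound (k : ℕ) :
    (∀ z : ℝ, z ≠ 0 →
      deriv (fun t : ℝ => (t : ℂ) * deriv (fun u : ℝ => Efun (k + 1) u) t) z
        = Complex.I * Efun k z) ∧
    (∃ c : ℝ, ∀ z : ℝ, z ≠ 0 → ‖Efun k z‖ ≤ c * (1 + lnp (1 / |z|))) := by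
  exact ⟨fun z hz => Efun_recursion k z hz, Efun_bound k⟩
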